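/- arXiv:2206.00349 — 2 statements merged into one kernel-verified Lean document; each statement's English description precedes it below -/
import Mathlib

section
/- (Theorem 1, part 2) For every model M, world w and hybrid formula φ: I have a winning strategy for the semantic game G(M, (O, w : φ)) if and only if M, w ⊭ φ. -/
/-- Hybrid logic formulas over nominals `ℕ` and propositional variables `ℕ`
(the two sorts are kept disjoint by the constructors). -/
inductive Form : Type where
  | prop : ℕ → Form
  | nom : ℕ → Form
  | rel : ℕ → ℕ → Form
  | and : Form → Form → Form
  | or : Form → Form → Form
  | imp : Form → Form → Form
  | neg : Form → Form
  | at_ : ℕ → Form → Form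
  | box : Form → Form
  | dia : Form → Form

/-- A model for hybrid logic: a nonempty set of worlds, an accessibility
relation, a valuation and an assignment of nominals to worlds. -/
structure Model where
  W : Type
  ne : Nonempty W
  R : W → W → Prop
  V : ℕ → W → Prop
  g : ℕ → W

/-- Satisfaction of a formula at a world of a model. -/
def sat (M : Model) : M.W → Form → Prop
  | w, .prop p => M.V p w
  | w, .nom i => M.g i = w
  | _, .rel i j => M.R (M.g i) (M.g j)
  | w, .and φ ψ => sat M w φ ∧ sat M w ψ
  | w, .or φ ψ => sat M w φ ∨ sat M w ψ
  | w, .imp φ ψ => ¬ sat M w φ ∨ sat M w ψ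
  | w, .neg φ => ¬ sat M w φ
  | _, .at_ i φ => sat M (M.g i) φ
  | w, .box φ => ∀ v, M.R w v → sat M v φ
  | w, .dia φ => ∃ v, M.R w v ∧ sat M v φ

/-- A model is named iff every world has a name, i.e. the assignment is surjective. -/
def Model.Named (M : Model) : Prop := Function.Surjective M.g

/-- A formula is valid iff it is true at every world of every model. -/
def Valid (φ : Form) : Prop := ∀ (M : Model) (w : M.W), sat M w φ

/-- Roles: `pro` means I am the proponent (`P`-state), `opp` that I am the opponent (`O`-state). -/
inductive Role : Type where
  | pro : Role
  | opp : Role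

/-- Game states of the semantic game over a model: `loc r w φ` is the state
`Q, w : φ` and `glob r φ` is the state `Q : φ` (with `Q = P` for `r = pro`, `Q = O` for `r = opp`). -/
inductive GState (M : Model) : Type where
  | loc : Role → M.W → Form → GState M
  | glob : Role → Form → GState M

/-- `IWins M s` holds iff I have a winning strategy for the semantic game `G(M, s)`:
a subtree of the game tree keeping exactly one child of every non-leaf node labelled "I"
(and all children of nodes labelled "Y"), all of whose leaves are labelled "I".
Each constructor corresponds to one game rule: at "I"-nodes I pick one child in which
I have a winning strategy; at "Y"-nodes I must have a winning strategy in every child;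
leaves must be labelled "I". -/
inductive IWins (M : Model) : GState M → Prop where
  -- elementary leaves
  | proProp {w p} : M.V p w → IWins M (.loc .pro w (.prop p))
  | oppProp {w p} : ¬ M.V p w → IWins M (.loc .opp w (.prop p))
  | proNom {w i} : M.g i = w → IWins M (.loc .pro w (.nom i))
  | oppNom {w i} : M.g i ≠ w → IWins M (.loc .opp w (.nom i))
  | proRel {w : M.W} {i j} : M.R (M.g i) (M.g j) → IWins M (.loc .pro w (.rel i j))
  | oppRel {w : M.W} {i j} : ¬ M.R (M.g i) (M.g j) → IWins M (.loc .opp w (.rel i j))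
  -- disjunction
  | proOrL {w φ ψ} : IWins M (.loc .pro w φ) → IWins M (.loc .pro w (.or φ ψ))
  | proOrR {w φ ψ} : IWins M (.loc .pro w ψ) → IWins M (.loc .pro w (.or φ ψ))
  | oppOr {w φ ψ} : IWins M (.loc .opp w φ) → IWins M (.loc .opp w ψ) →
      IWins M (.loc .opp w (.or φ ψ))
  -- conjunction
  | proAnd {w φ ψ} : IWins M (.loc .pro w φ) → IWins M (.loc .pro w ψ) →
      IWins M (.loc .pro w (.and φ ψ))
  | oppAndL {w φ ψ} : IWins M (.loc .opp w φ) → IWins M (.loc .opp w (.and φ ψ))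
  | oppAndR {w φ ψ} : IWins M (.loc .opp w ψ) → IWins M (.loc .opp w (.and φ ψ))
  -- implication
  | proImpL {w φ ψ} : IWins M (.loc .opp w φ) → IWins M (.loc .pro w (.imp φ ψ))
  | proImpR {w φ ψ} : IWins M (.loc .pro w ψ) → IWins M (.loc .pro w (.imp φ ψ))
  | oppImp {w φ ψ} : IWins M (.loc .pro w φ) → IWins M (.loc .opp w ψ) →
      IWins M (.loc .opp w (.imp φ ψ))
  -- negation (role switch)
  | proNeg {w φ} : IWins M (.loc .opp w φ) → IWins M (.loc .pro w (.neg φ))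
  | oppNeg {w φ} : IWins M (.loc .pro w φ) → IWins M (.loc .opp w (.neg φ))
  -- @-operator
  | proAt {w i φ} : IWins M (.loc .pro (M.g i) φ) → IWins M (.loc .pro w (.at_ i φ))
  | oppAt {w i φ} : IWins M (.loc .opp (M.g i) φ) → IWins M (.loc .opp w (.at_ i φ))
  -- box: for `P` a "Y"-node over all successors (a leaf labelled "I" if there are none);
  -- for `O` an "I"-node over all successors (a leaf labelled "Y" if there are none)
  | proBox {w φ} : (∀ v, M.R w v → IWins M (.loc .pro v φ)) → IWins M (.loc .pro w (.box φ))
  | oppBox {w φ} (v) : M.R w v → IWins M (.loc .opp v φ) → IWins M (.loc .opp w (.box φ))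
  -- diamond: dual to box
  | proDia {w φ} (v) : M.R w v → IWins M (.loc .pro v φ) → IWins M (.loc .pro w (.dia φ))
  | oppDia {w φ} : (∀ v, M.R w v → IWins M (.loc .opp v φ)) → IWins M (.loc .opp w (.dia φ))
  -- global states
  | proGlob {φ} : (∀ w, IWins M (.loc .pro w φ)) → IWins M (.glob .pro φ)
  | oppGlob {φ} (w) : IWins M (.loc .opp w φ) → IWins M (.glob .opp φ)

theorem sound_aux (M : Model) (s : GState M) (h : IWins M s) :
    match s with
    | .loc .pro w φ => sat M w φ
    | .loc .opp w φ => ¬ sat M w φ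
    | .glob _ _ => True := by
  induction h <;> simp only [sat] at * <;> first | trivial | tauto | grind

theorem complete_aux (M : Model) (φ : Form) : ∀ w : M.W,
    (sat M w φ → IWins M (.loc .pro w φ)) ∧ (¬ sat M w φ → IWins M (.loc .opp w φ)) := by
  induction φ with
  | prop p => exact fun w => ⟨.proProp, .oppProp⟩
  | nom i => exact fun w => ⟨.proNom, .oppNom⟩
  | rel i j => exact fun w => ⟨.proRel, .oppRel⟩
  | and φ ψ h1 h2 =>
    intro w
    refine ⟨fun h => .proAnd ((h1 w).1 h.1) ((h2 w).1 h.2), fun h => ?_⟩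
    by_cases a : sat M w φ
    · exact .oppAndR ((h2 w).2 fun b => h ⟨a, b⟩)
    · exact .oppAndL ((h1 w).2 a)
  | or φ ψ h1 h2 =>
    intro w
    refine ⟨fun h => ?_, fun h => .oppOr ((h1 w).2 fun a => h (Or.inl a))
      ((h2 w).2 fun a => h (Or.inr a))⟩
    rcases h with h | h
    · exact .proOrL ((h1 w).1 h)
    · exact .proOrR ((h2 w).1 h)
  | imp φ ψ h1 h2 =>
    intro w
    refine ⟨fun h => ?_, fun h => .oppImp ((h1 w).1 (not_not.1 fun a => h (Or.inl a)))
      ((h2 w).2 fun a => h (Or.inr a))⟩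
    rcases h with h | h
    · exact .proImpL ((h1 w).2 h)
    · exact .proImpR ((h2 w).1 h)
  | neg φ h1 =>
    exact fun w => ⟨fun h => .proNeg ((h1 w).2 h), fun h => .oppNeg ((h1 w).1 (not_not.1 h))⟩
  | at_ i φ h1 =>
    exact fun w => ⟨fun h => .proAt ((h1 _).1 h), fun h => .oppAt ((h1 _).2 h)⟩
  | box φ h1 =>
    intro w
    refine ⟨fun h => .proBox fun v r => (h1 v).1 (h v r), fun h => ?_⟩
    simp only [sat, not_forall] at h
    obtain ⟨v, r, h⟩ := h
    exact .oppBox v r ((h1 v).2 h)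
  | dia φ h1 =>
    intro w
    refine ⟨fun h => ?_, fun h => .oppDia fun v r => (h1 v).2 fun a => h ⟨v, r, a⟩⟩
    obtain ⟨v, r, h⟩ := h
    exact .proDia v r ((h1 v).1 h)

/-- (Theorem 1, part 2) I have a winning strategy for `G(M, (O, w : φ))` iff `M, w ⊭ φ`. -/
theorem iWins_opp_iff_not_sat (M : Model) (w : M.W) (φ : Form) :
    IWins M (.loc .opp w φ) ↔ ¬ sat M w φ :=
  ⟨fun h => sound_aux M _ h, (complete_aux M φ w).2⟩
end

section
/- (Proposition 2, part 1) For a hybrid formula φ and a nominal i not occurring in φ: the disjunctive state P : φ is winning if and only if the disjunctive state P, i : φ is winning. -/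
/-- Role switch. -/
def Role.swap : Role → Role
  | .pro => .opp
  | .opp => .pro

/-- Game states of the semantic game over a named model, with worlds referred to
by their names: `loc r i φ` is `Q, i : φ` and `glob r φ` is `Q : φ`. -/
inductive NState : Type where
  | loc : Role → ℕ → Form → NState
  | glob : Role → Form → NState

/-- Elementary formulas: `p`, `i`, `R(i,j)`. -/
def Form.elem : Form → Prop
  | .prop _ => True
  | .nom _ => True
  | .rel _ _ => True
  | _ => False

/-- Elementary game states: states `Q, i : φ` with `φ` elementary (these are the
leaves of the semantic game over named models). -/
def NState.elem : NState → Prop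
  | .loc _ _ φ => φ.elem
  | .glob _ _ => False

/-- States labelled "I" (where it is My choice); all other non-leaf states are labelled "Y". -/
def NState.myTurn : NState → Prop
  | .loc .pro _ (.or _ _) => True
  | .loc .pro _ (.imp _ _) => True
  | .loc .pro _ (.neg _) => True
  | .loc .pro _ (.at_ _ _) => True
  | .loc .pro _ (.dia _) => True
  | .loc .opp _ (.and _ _) => True
  | .loc .opp _ (.box _) => True
  | .glob .opp _ => True
  | _ => False

/-- The (model-independent) child relation of the semantic game over named models,
using the reformulated rules `(R_□)`, `(R_◇)` and `(R_U)`: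
`NChild s t` says that `t` is a child of `s` in the game tree. -/
inductive NChild : NState → NState → Prop where
  | orL (r i φ ψ) : NChild (.loc r i (.or φ ψ)) (.loc r i φ)
  | orR (r i φ ψ) : NChild (.loc r i (.or φ ψ)) (.loc r i ψ)
  | andL (r i φ ψ) : NChild (.loc r i (.and φ ψ)) (.loc r i φ)
  | andR (r i φ ψ) : NChild (.loc r i (.and φ ψ)) (.loc r i ψ)
  | impL (r i φ ψ) : NChild (.loc r i (.imp φ ψ)) (.loc r.swap i φ)
  | impR (r i φ ψ) : NChild (.loc r i (.imp φ ψ)) (.loc r i ψ)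
  | neg (r i φ) : NChild (.loc r i (.neg φ)) (.loc r.swap i φ)
  | at_ (r i j φ) : NChild (.loc r i (.at_ j φ)) (.loc r j φ)
  | box (r i φ) (j : ℕ) : NChild (.loc r i (.box φ)) (.loc r j (.or (.neg (.rel i j)) φ))
  | dia (r i φ) (j : ℕ) : NChild (.loc r i (.dia φ)) (.loc r j (.and (.rel i j) φ))
  | glob (r φ) (i : ℕ) : NChild (.glob r φ) (.loc r i φ)

/-- The label of an elementary leaf state in the game over the model `M`:
"I" iff the corresponding elementary claim is correct. -/
def elemIWin (M : Model) : NState → Prop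
  | .loc .pro i φ => sat M (M.g i) φ
  | .loc .opp i φ => ¬ sat M (M.g i) φ
  | .glob _ _ => False

/-- I have a winning strategy for the semantic game `G(M, s)` over a named model:
at "I"-nodes I keep one child, at "Y"-nodes all children, and all leaves are labelled "I". -/
inductive IWinsN (M : Model) : NState → Prop where
  | leaf {s} : s.elem → elemIWin M s → IWinsN M s
  | move {s t} : s.myTurn → NChild s t → IWinsN M t → IWinsN M s
  | resp {s} : ¬ s.myTurn → ¬ s.elem → (∀ t, NChild s t → IWinsN M t) → IWinsN M s

/-- You have a winning strategy for the semantic game `G(M, s)` over a named model: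
at "Y"-nodes You keep one child, at "I"-nodes all children, and all leaves are labelled "Y". -/
inductive YWinsN (M : Model) : NState → Prop where
  | leaf {s} : s.elem → ¬ elemIWin M s → YWinsN M s
  | move {s t} : ¬ s.myTurn → NChild s t → YWinsN M t → YWinsN M s
  | resp {s} : s.myTurn → (∀ t, NChild s t → YWinsN M t) → YWinsN M s

/-- A disjunctive state: a finite multiset of game states. -/
abbrev DState : Type := Multiset NState

/-- A disjunctive state is elementary iff all its game states are. -/
def DElem (D : DState) : Prop := ∀ s ∈ D, s.elem

/-- A regulation function maps every non-elementary disjunctive state to one of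
its non-elementary game states. -/
def IsRegulation (ρ : DState → NState) : Prop :=
  ∀ D : DState, ¬ DElem D → ρ D ∈ D ∧ ¬ (ρ D).elem

/-- `D` is game valid: for every named model `M` there is a member of `D` for
which I have a winning strategy in the semantic game over `M`. -/
def GameValid (D : DState) : Prop :=
  ∀ M : Model, M.Named → ∃ s ∈ D, IWinsN M s

/-- I have a winning strategy for the disjunctive game `DG(D, ρ)`.
At the state `g ⋁ D` with `ρ (g ⋁ D) = g`: if `g` is labelled "I", I either move in `g`
or duplicate `g`; if `g` is labelled "Y", You move in `g` and I must win after every move.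
An elementary disjunctive state is a leaf labelled "I" (winning for Me) iff for every named
model some member of it is a leaf labelled "I" of the semantic game over that model.
Since winning strategies are wellfounded trees, infinite plays are not winning for Me. -/
inductive DWins (ρ : DState → NState) : DState → Prop where
  | leaf {D : DState} : DElem D → (∀ M : Model, M.Named → ∃ s ∈ D, IWinsN M s) →
      DWins ρ D
  | movI {D : DState} {g g' : NState} : ρ (g ::ₘ D) = g → g.myTurn → NChild g g' →
      DWins ρ (g' ::ₘ D) → DWins ρ (g ::ₘ D)
  | dup {D : DState} {g : NState} : ρ (g ::ₘ D) = g → g.myTurn →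
      DWins ρ (g ::ₘ g ::ₘ D) → DWins ρ (g ::ₘ D)
  | movY {D : DState} {g : NState} : ρ (g ::ₘ D) = g → ¬ g.myTurn → ¬ g.elem →
      (∀ g', NChild g g' → DWins ρ (g' ::ₘ D)) → DWins ρ (g ::ₘ D)

/-- `D` is winning: there is a regulation `ρ` such that I have a winning strategy
for `DG(D, ρ)`. -/
def Winning (D : DState) : Prop :=
  ∃ ρ : DState → NState, IsRegulation ρ ∧ DWins ρ D

/-- `Form.occurs k φ`: the nominal `k` occurs in the formula `φ`. -/
def Form.occurs (k : ℕ) : Form → Prop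
  | .prop _ => False
  | .nom i => i = k
  | .rel i j => i = k ∨ j = k
  | .and φ ψ => φ.occurs k ∨ ψ.occurs k
  | .or φ ψ => φ.occurs k ∨ ψ.occurs k
  | .imp φ ψ => φ.occurs k ∨ ψ.occurs k
  | .neg φ => φ.occurs k
  | .at_ i φ => i = k ∨ φ.occurs k
  | .box φ => φ.occurs k
  | .dia φ => φ.occurs k

/-- A nominal occurs in a game state iff it occurs as its label or in its formula. -/
def NState.occurs (k : ℕ) : NState → Prop
  | .loc _ i φ => i = k ∨ φ.occurs k
  | .glob _ φ => φ.occurs k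

/-- A nominal occurs in a disjunctive state iff it occurs in one of its game states. -/
def DOccurs (k : ℕ) (D : DState) : Prop := ∃ s ∈ D, s.occurs k


def Form.sub (σ : ℕ → ℕ) : Form → Form
  | .prop p => .prop p
  | .nom i => .nom (σ i)
  | .rel i j => .rel (σ i) (σ j)
  | .and φ ψ => .and (φ.sub σ) (ψ.sub σ)
  | .or φ ψ => .or (φ.sub σ) (ψ.sub σ)
  | .imp φ ψ => .imp (φ.sub σ) (ψ.sub σ)
  | .neg φ => .neg (φ.sub σ)
  | .at_ i φ => .at_ (σ i) (φ.sub σ)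
  | .box φ => .box (φ.sub σ)
  | .dia φ => .dia (φ.sub σ)

def NState.sub (σ : ℕ → ℕ) : NState → NState
  | .loc r i φ => .loc r (σ i) (φ.sub σ)
  | .glob r φ => .glob r (φ.sub σ)

theorem Form.sub_congr (σ τ : ℕ → ℕ) (φ : Form) (h : ∀ k, φ.occurs k → σ k = τ k) :
    φ.sub σ = φ.sub τ := by
  induction φ <;> simp_all [Form.sub, Form.occurs]

theorem Form.sub_id (φ : Form) : φ.sub (fun k => k) = φ := by
  induction φ <;> simp_all [Form.sub]

theorem NState.sub_congr (σ τ : ℕ → ℕ) (s : NState) (h : ∀ k, s.occurs k → σ k = τ k) :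
    s.sub σ = s.sub τ := by
  cases s with
  | loc r i φ =>
    simp only [NState.sub, h i (Or.inl rfl)]
    rw [Form.sub_congr σ τ φ (fun k hk => h k (Or.inr hk))]
  | glob r φ =>
    simp only [NState.sub]
    rw [Form.sub_congr σ τ φ (fun k hk => h k hk)]

theorem Form.bdd (φ : Form) : ∃ n, ∀ k, φ.occurs k → k < n := by
  induction φ with
  | prop p => exact ⟨0, fun k h => h.elim⟩
  | nom i => exact ⟨i + 1, fun k h => by simp [Form.occurs] at h; omega⟩
  | rel i j => exact ⟨i + j + 1, fun k h => by simp [Form.occurs] at h; omega⟩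
  | and φ ψ h1 h2 | or φ ψ h1 h2 | imp φ ψ h1 h2 =>
    obtain ⟨a, ha⟩ := h1
    obtain ⟨b, hb⟩ := h2
    refine ⟨a + b, fun k h => ?_⟩
    rcases h with h | h
    · have := ha k h; omega
    · have := hb k h; omega
  | neg φ h | box φ h | dia φ h => exact h
  | at_ i φ h =>
    obtain ⟨a, ha⟩ := h
    refine ⟨a + i + 1, fun k h => ?_⟩
    rcases h with h | h
    · omega
    · have := ha k h; omega

theorem NState.bdd (s : NState) : ∃ n, ∀ k, s.occurs k → k < n := by
  cases s with
  | loc r i φ =>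
    obtain ⟨a, ha⟩ := φ.bdd
    refine ⟨a + i + 1, fun k h => ?_⟩
    rcases h with h | h
    · omega
    · have := ha k h; omega
  | glob r φ => exact φ.bdd

theorem DState.fresh (D : DState) : ∃ n, ∀ s ∈ D, ¬ s.occurs n := by
  have : ∃ n, ∀ s ∈ D, ∀ k, s.occurs k → k < n := by
    induction D using Multiset.induction_on with
    | empty => exact ⟨0, by simp⟩
    | cons a D ih =>
      obtain ⟨n, hn⟩ := ih
      obtain ⟨m, hm⟩ := a.bdd
      refine ⟨n + m, fun s hs k hk => ?_⟩
      rcases Multiset.mem_cons.1 hs with rfl | hs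
      · have := hm k hk; omega
      · have := hn s hs k hk; omega
  obtain ⟨n, hn⟩ := this
  exact ⟨n, fun s hs h => lt_irrefl _ (hn s hs n h)⟩

theorem NState.sub_elem (σ : ℕ → ℕ) (s : NState) : (s.sub σ).elem ↔ s.elem := by
  cases s with
  | loc r i φ => cases φ <;> simp [NState.sub, NState.elem, Form.sub, Form.elem]
  | glob r φ => simp [NState.sub, NState.elem]

theorem NState.sub_myTurn (σ : ℕ → ℕ) (s : NState) : (s.sub σ).myTurn ↔ s.myTurn := by
  cases s with
  | loc r i φ => cases r <;> cases φ <;> simp [NState.sub, NState.myTurn, Form.sub]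
  | glob r φ => cases r <;> simp [NState.sub, NState.myTurn]

theorem NState.not_elem_of_myTurn (s : NState) (h : s.myTurn) : ¬ s.elem := by
  cases s with
  | loc r i φ => cases r <;> cases φ <;> simp_all [NState.elem, NState.myTurn, Form.elem]
  | glob r φ => simp [NState.elem]

theorem NChild.sub (σ : ℕ → ℕ) {s t : NState} (h : NChild s t) :
    NChild (s.sub σ) (t.sub σ) := by
  cases h <;> simp only [NState.sub, Form.sub] <;> constructor

/-- Children of a substituted state, using a fresh nominal `n`. -/
theorem NChild.of_sub (σ : ℕ → ℕ) (n : ℕ) (s t : NState) (hn : ¬ s.occurs n)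
    (h : NChild (s.sub σ) t) :
    ∃ (k : ℕ) (s' : NState), NChild s s' ∧ s'.sub (Function.update σ n k) = t := by
  have key : ∀ k, s.sub (Function.update σ n k) = s.sub σ := fun k =>
    NState.sub_congr _ _ _ (fun m hm => Function.update_of_ne (by rintro rfl; exact hn hm) _ _)
  have keyn : Function.update σ n (σ n) = σ := Function.update_eq_self _ _
  cases s with
  | glob r φ =>
    cases h with
    | glob _ _ j =>
      have := key j
      simp only [NState.sub, NState.glob.injEq, true_and] at this
      exact ⟨j, _, .glob _ _ n, by simp [NState.sub, this]⟩
  | loc r i φ =>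
    cases φ with
    | prop p => simp only [NState.sub, Form.sub] at h; cases h
    | nom p => simp only [NState.sub, Form.sub] at h; cases h
    | rel p q => simp only [NState.sub, Form.sub] at h; cases h
    | and φ ψ =>
      simp only [NState.sub, Form.sub] at h
      cases h
      · exact ⟨σ n, _, .andL .., by rw [keyn]; rfl⟩
      · exact ⟨σ n, _, .andR .., by rw [keyn]; rfl⟩
    | or φ ψ =>
      simp only [NState.sub, Form.sub] at h
      cases h
      · exact ⟨σ n, _, .orL .., by rw [keyn]; rfl⟩
      · exact ⟨σ n, _, .orR .., by rw [keyn]; rfl⟩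
    | imp φ ψ =>
      simp only [NState.sub, Form.sub] at h
      cases h
      · exact ⟨σ n, _, .impL .., by rw [keyn]; rfl⟩
      · exact ⟨σ n, _, .impR .., by rw [keyn]; rfl⟩
    | neg φ =>
      simp only [NState.sub, Form.sub] at h
      cases h
      exact ⟨σ n, _, .neg .., by rw [keyn]; rfl⟩
    | at_ m φ =>
      simp only [NState.sub, Form.sub] at h
      cases h
      exact ⟨σ n, _, .at_ .., by rw [keyn]; rfl⟩
    | box φ =>
      simp only [NState.sub, Form.sub] at h
      cases h with
      | box _ _ _ j =>
        have := key j
        simp only [NState.sub, Form.sub, NState.loc.injEq, true_and, Form.box.injEq] at this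
        exact ⟨j, _, .box _ _ _ n, by simp [NState.sub, Form.sub, this]⟩
    | dia φ =>
      simp only [NState.sub, Form.sub] at h
      cases h with
      | dia _ _ _ j =>
        have := key j
        simp only [NState.sub, Form.sub, NState.loc.injEq, true_and, Form.dia.injEq] at this
        exact ⟨j, _, .dia _ _ _ n, by simp [NState.sub, Form.sub, this]⟩

theorem iwins_elem (M : Model) (s : NState) (hs : s.elem) : IWinsN M s ↔ elemIWin M s := by
  constructor
  · intro h
    cases h with
    | leaf _ h => exact h
    | move h _ _ => exact absurd hs (s.not_elem_of_myTurn h)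
    | resp _ h _ => exact absurd hs h
  · exact IWinsN.leaf hs

def LeafWin (D : DState) : Prop :=
  DElem D ∧ ∀ M : Model, M.Named → ∃ s ∈ D, IWinsN M s

def Model.pull (M : Model) (σ : ℕ → ℕ) : Model where
  W := Set.range (fun k => M.g (σ k))
  ne := ⟨⟨_, ⟨0, rfl⟩⟩⟩
  R a b := M.R a.1 b.1
  V p a := M.V p a.1
  g k := ⟨M.g (σ k), ⟨k, rfl⟩⟩

theorem pull_elem (M : Model) (σ : ℕ → ℕ) (s : NState) (hs : s.elem) :
    elemIWin (M.pull σ) s ↔ elemIWin M (s.sub σ) := by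
  cases s with
  | glob r φ => exact hs.elim
  | loc r i φ =>
    cases φ <;> first | exact hs.elim | skip
    all_goals cases r <;>
      simp [elemIWin, NState.sub, Form.sub, sat, Model.pull]
    · exact Subtype.ext_iff
    · exact not_congr Subtype.ext_iff

theorem LeafWin.sub (σ : ℕ → ℕ) {D : DState} (h : LeafWin D) :
    LeafWin (D.map (NState.sub σ)) := by
  refine ⟨?_, ?_⟩
  · intro s hs
    obtain ⟨t, ht, rfl⟩ := Multiset.mem_map.1 hs
    exact (t.sub_elem σ).2 (h.1 t ht)
  · intro M _
    obtain ⟨s, hs, hw⟩ := h.2 (M.pull σ) (by rintro ⟨_, k, rfl⟩; exact ⟨k, rfl⟩)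
    have he := h.1 s hs
    refine ⟨s.sub σ, Multiset.mem_map_of_mem _ hs, ?_⟩
    rw [iwins_elem _ _ ((s.sub_elem σ).2 he), ← pull_elem M σ s he]
    exact (iwins_elem _ _ he).1 hw

def Step (S : DState → Prop) (D : DState) (g : NState) : Prop :=
  ∃ D0, D = g ::ₘ D0 ∧
    ((g.myTurn ∧ ((∃ g', NChild g g' ∧ S (g' ::ₘ D0)) ∨ S (g ::ₘ g ::ₘ D0))) ∨
     (¬ g.myTurn ∧ ¬ g.elem ∧ ∀ g', NChild g g' → S (g' ::ₘ D0)))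

theorem Step.not_elem {S : DState → Prop} {D : DState} {g : NState} (h : Step S D g) :
    g ∈ D ∧ ¬ g.elem := by
  obtain ⟨D0, rfl, h⟩ := h
  refine ⟨Multiset.mem_cons_self _ _, ?_⟩
  rcases h with h | h
  · exact g.not_elem_of_myTurn h.1
  · exact h.2.1

def PR (α : Ordinal.{0}) (D : DState) : Prop :=
  LeafWin D ∨ ∃ g, Step (fun D' => ∃ β, ∃ _ : β < α, PR β D') D g
termination_by α

def Prov (D : DState) : Prop := ∃ α, PR α D

theorem Prov.leaf {D : DState} (h : LeafWin D) : Prov D :=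
  ⟨0, by rw [PR]; exact Or.inl h⟩

theorem Prov.step {D : DState} {g : NState} (h : Step Prov D g) : Prov D := by
  obtain ⟨D0, rfl, h⟩ := h
  rcases h with ⟨hm, ⟨g', hc, α, hα⟩ | ⟨α, hα⟩⟩ | ⟨hm, he, h⟩
  · refine ⟨Order.succ α, ?_⟩
    rw [PR]
    exact Or.inr ⟨g, D0, rfl, Or.inl ⟨hm, Or.inl ⟨g', hc, α, Order.lt_succ α, hα⟩⟩⟩
  · refine ⟨Order.succ α, ?_⟩
    rw [PR]
    exact Or.inr ⟨g, D0, rfl, Or.inl ⟨hm, Or.inr ⟨α, Order.lt_succ α, hα⟩⟩⟩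
  · have : ∀ g' : NState, ∃ α, NChild g g' → PR α (g' ::ₘ D0) := fun g' => by
      by_cases hc : NChild g g'
      · obtain ⟨α, hα⟩ := h g' hc
        exact ⟨α, fun _ => hα⟩
      · exact ⟨0, fun h => absurd h hc⟩
    choose f hf using this
    refine ⟨Order.succ (⨆ x, f x), ?_⟩
    rw [PR]
    refine Or.inr ⟨g, D0, rfl, Or.inr ⟨hm, he, fun g' hc => ⟨f g', ?_, hf g' hc⟩⟩⟩
    exact Order.lt_succ_of_le (Ordinal.le_iSup f g')

noncomputable def rk (D : DState) : Ordinal.{0} := sInf {α | PR α D}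

theorem rk_le {D : DState} {α : Ordinal.{0}} (h : PR α D) : rk D ≤ α := csInf_le' h

theorem rk_spec {D : DState} (h : Prov D) : PR (rk D) D :=
  csInf_mem (s := {α | PR α D}) h

def Good (D : DState) (g : NState) : Prop :=
  Step (fun D' => ∃ β, ∃ _ : β < rk D, PR β D') D g

open Classical in
noncomputable def reg (D : DState) : NState :=
  if h : ∃ g, Good D g then h.choose
  else if h : ∃ g ∈ D, ¬ g.elem then h.choose
  else .glob .pro (.prop 0)

theorem reg_good {D : DState} (h : ∃ g, Good D g) : Good D (reg D) := by
  rw [reg, dif_pos h]; exact h.choose_spec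

theorem reg_isRegulation : IsRegulation reg := by
  intro D hD
  by_cases h : ∃ g, Good D g
  · exact (reg_good h).not_elem
  · have h' : ∃ g ∈ D, ¬ g.elem := by simpa [DElem] using hD
    rw [reg, dif_neg h, dif_pos h']
    exact h'.choose_spec

theorem dwins_reg (α : Ordinal.{0}) : ∀ D, PR α D → DWins reg D := by
  induction α using WellFoundedLT.induction with
  | ind α ih =>
    intro D hD
    have hs := rk_spec ⟨α, hD⟩
    have hle := rk_le hD
    rw [PR] at hs
    rcases hs with h | h
    · exact .leaf h.1 h.2
    · have hg := reg_good h
      generalize hr : reg D = g at hg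
      obtain ⟨D0, hD0, h⟩ := hg
      rw [hD0] at hr ⊢
      rcases h with ⟨hm, ⟨g', hc, β, hβ, hw⟩ | ⟨β, hβ, hw⟩⟩ | ⟨hm, he, h⟩
      · exact .movI hr hm hc (ih β (hβ.trans_le hle) _ hw)
      · exact .dup hr hm (ih β (hβ.trans_le hle) _ hw)
      · refine .movY hr hm he (fun g' hc => ?_)
        obtain ⟨β, hβ, hw⟩ := h g' hc
        exact ih β (hβ.trans_le hle) _ hw

theorem dwins_sub {ρ : DState → NState} {D : DState} (h : DWins ρ D) :
    ∀ σ : ℕ → ℕ, Prov (D.map (NState.sub σ)) := by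
  induction h with
  | leaf h1 h2 => exact fun σ => .leaf (LeafWin.sub σ ⟨h1, h2⟩)
  | @movI D g g' _ hm hc _ ih =>
    intro σ
    refine Prov.step (g := g.sub σ) ⟨D.map (NState.sub σ), by simp, Or.inl
      ⟨(g.sub_myTurn σ).2 hm, Or.inl ⟨g'.sub σ, hc.sub σ, ?_⟩⟩⟩
    simpa using ih σ
  | @dup D g _ hm _ ih =>
    intro σ
    refine Prov.step (g := g.sub σ) ⟨D.map (NState.sub σ), by simp, Or.inl
      ⟨(g.sub_myTurn σ).2 hm, Or.inr ?_⟩⟩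
    simpa using ih σ
  | @movY D g _ hm he _ ih =>
    intro σ
    refine Prov.step (g := g.sub σ) ⟨D.map (NState.sub σ), by simp, Or.inr
      ⟨fun h => hm ((g.sub_myTurn σ).1 h), fun h => he ((g.sub_elem σ).1 h), ?_⟩⟩
    intro t ht
    obtain ⟨n, hn⟩ := DState.fresh (g ::ₘ D)
    obtain ⟨k, s', hs', rfl⟩ := NChild.of_sub σ n g t (hn g (Multiset.mem_cons_self _ _)) ht
    have := ih s' hs' (Function.update σ n k)
    rw [Multiset.map_cons] at this
    have e : D.map (NState.sub (Function.update σ n k)) = D.map (NState.sub σ) := by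
      refine Multiset.map_congr rfl (fun s hs => NState.sub_congr _ _ _ (fun m hm => ?_))
      exact Function.update_of_ne
        (by rintro rfl; exact hn s (Multiset.mem_cons_of_mem hs) hm) _ _
    rwa [e] at this

/-- (Proposition 2, part 1) For a nominal `i` not occurring in `φ`:
`P : φ` is winning iff `P, i : φ` is winning. -/
theorem winning_glob_iff_winning_fresh (φ : Form) (i : ℕ) (hi : ¬ Form.occurs i φ) :
    Winning {NState.glob .pro φ} ↔ Winning {NState.loc .pro i φ} := by
  constructor
  · rintro ⟨ρ, hρ, h⟩
    refine ⟨ρ, hρ, ?_⟩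
    generalize hD : ({NState.glob .pro φ} : DState) = D at h
    cases h with
    | leaf h _ =>
      subst hD
      exact (h _ (Multiset.mem_singleton_self _)).elim
    | @movI D0 g g' _ hm _ _ =>
      obtain ⟨rfl, rfl⟩ := Multiset.singleton_eq_cons_iff _ |>.1 hD
      exact hm.elim
    | @dup D0 g _ hm _ =>
      obtain ⟨rfl, rfl⟩ := Multiset.singleton_eq_cons_iff _ |>.1 hD
      exact hm.elim
    | @movY D0 g _ hm he h =>
      obtain ⟨rfl, rfl⟩ := Multiset.singleton_eq_cons_iff _ |>.1 hD
      exact h _ (.glob _ _ i)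
  · rintro ⟨ρ, hρ, h⟩
    have hp : ∀ j, Prov {NState.loc .pro j φ} := by
      intro j
      have := dwins_sub h (Function.update (fun k => k) i j)
      have e : φ.sub (Function.update (fun k => k) i j) = φ := by
        rw [Form.sub_congr _ (fun k => k) φ, Form.sub_id]
        exact fun k hk => Function.update_of_ne (by rintro rfl; exact hi hk) _ _
      simpa [NState.sub, e] using this
    have hg : Prov {NState.glob .pro φ} := by
      refine Prov.step (g := .glob .pro φ) ⟨0, rfl, Or.inr ⟨fun h => h, fun h => h, ?_⟩⟩
      intro g' hc
      cases hc with
      | glob _ _ j => exact hp j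
    obtain ⟨α, hα⟩ := hg
    exact ⟨reg, reg_isRegulation, dwins_reg α _ hα⟩
end
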